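/- arXiv:1606.05099 — 3 statements merged into one kernel-verified Lean document; each statement's English description precedes it below -/
import Mathlib

section
/- Let α ∈ ((√33 − 5)/2, √2 − 1) and let T_α be the 2-expansion map on [α, α+1]. Then T_α(α + 1) = (1 − α)/(α + 1), this value lies in the open interval (α, 2/(α+4)), and consequently T_α²(α + 1) = (6α − 2)/(1 − α). -/
/-- The `N`-expansion map for `N = 2`: `T_α(x) = 2/x - ⌊2/x - α⌋`. -/
noncomputable def Texp (α x : ℝ) : ℝ := 2 / x - ↑⌊2 / x - α⌋

/-!
The map `T_α` acts as `x ↦ 2/x - d` on the cylinder `(2/(α + d + 1), 2/(α + d)]`. The right endpoint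
`α + 1` has digit `1` as long as `(α + 1)² ≤ 2`. The bound `α > (√33 - 5)/2` means `2/(α + 5) < α`,
so all of `(α, 2/(α + 4)]` lies in the cylinder of digit `4`; the same inequality is what puts
`T_α(α + 1)` below `2/(α + 4)`.
-/

section

variable {α x : ℝ} {d : ℤ}

lemma Texp_eq_two_div_sub_of_mem_Ioc (hd : 0 < α + d)
    (hx : x ∈ Set.Ioc (2 / (α + d + 1)) (2 / (α + d))) :
    Texp α x = 2 / x - d := by
  have hx_pos : 0 < x := lt_trans (by positivity) hx.1
  have hlower : α + d ≤ 2 / x := (le_div_comm₀ hx_pos hd).mp hx.2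
  have hupper : 2 / x < α + d + 1 := (div_lt_comm₀ (by positivity) hx_pos).mp hx.1
  have hfloor : ⌊2 / x - α⌋ = d := Int.floor_eq_iff.mpr ⟨by linarith, by linarith⟩
  rw [Texp, hfloor]

lemma Texp_eq_two_div_sub_of_mem_Ioc_self (hd : 0 < α + d) (hα : 2 ≤ α * (α + d + 1))
    (hx : x ∈ Set.Ioc α (2 / (α + d))) : Texp α x = 2 / x - d := by
  have hcylinder : 2 / (α + d + 1) ≤ α := (div_le_iff₀ (by positivity)).mpr hα
  exact Texp_eq_two_div_sub_of_mem_Ioc hd ⟨hcylinder.trans_lt hx.1, hx.2⟩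

lemma Texp_add_one (hα : 0 < α) (hα' : (α + 1) ^ 2 ≤ 2) :
    Texp α (α + 1) = (1 - α) / (α + 1) := by
  have hdigit : α + 1 ∈ Set.Ioc (2 / (α + (1 : ℤ) + 1)) (2 / (α + (1 : ℤ))) := by
    push_cast
    constructor
    · rw [div_lt_iff₀ (by positivity)]
      nlinarith
    · rwa [le_div_iff₀ (by positivity), ← sq]
  rw [Texp_eq_two_div_sub_of_mem_Ioc (by push_cast; positivity) hdigit]
  push_cast
  field_simp
  ring

lemma one_sub_div_add_one_mem_Ioo_iff (hα : -1 < α) :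
    (1 - α) / (α + 1) ∈ Set.Ioo α (2 / (α + 4)) ↔ (α + 1) ^ 2 < 2 ∧ 2 < α * (α + 5) := by
  have h1 : 0 < α + 1 := by linarith
  have h4 : 0 < α + 4 := by linarith
  rw [Set.mem_Ioo, lt_div_iff₀ h1, div_lt_div_iff₀ h1 h4]
  constructor <;> rintro ⟨hleft, hright⟩ <;> constructor <;> linarith

lemma add_one_sq_lt_two (hα : -1 ≤ α) (h : α < √2 - 1) : (α + 1) ^ 2 < 2 :=
  (Real.lt_sqrt (by linarith)).mp (by linarith)

lemma two_lt_mul_add_five (h : (√33 - 5) / 2 < α) : 2 < α * (α + 5) := by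
  have hsq : 33 < (2 * α + 5) ^ 2 := Real.lt_sq_of_sqrt_lt (by linarith)
  linarith

end

theorem stmt_2 (α : ℝ) (h₁ : (Real.sqrt 33 - 5) / 2 < α) (h₂ : α < Real.sqrt 2 - 1) :
    Texp α (α + 1) = (1 - α) / (α + 1) ∧
    (1 - α) / (α + 1) ∈ Set.Ioo α (2 / (α + 4)) ∧
    Texp α (Texp α (α + 1)) = (6 * α - 2) / (1 - α) := by
  have hα : 0 < α := by
    have : 5 < √33 := Real.lt_sqrt_of_sq_lt (by norm_num)
    linarith
  have hsq : (α + 1) ^ 2 < 2 := add_one_sq_lt_two (by linarith) h₂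
  have hmul : 2 < α * (α + 5) := two_lt_mul_add_five h₁
  have hfirst : Texp α (α + 1) = (1 - α) / (α + 1) := Texp_add_one hα hsq.le
  have hmem : (1 - α) / (α + 1) ∈ Set.Ioo α (2 / (α + 4)) :=
    (one_sub_div_add_one_mem_Ioo_iff (by linarith)).mpr ⟨hsq, hmul⟩
  have hsecond : Texp α ((1 - α) / (α + 1)) = 2 / ((1 - α) / (α + 1)) - (4 : ℤ) :=
    Texp_eq_two_div_sub_of_mem_Ioc_self (by push_cast; positivity) (by push_cast; linarith)
      (by exact_mod_cast Set.Ioo_subset_Ioc_self hmem)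
  refine ⟨hfirst, hmem, ?_⟩
  have hpos : 0 < 1 - α := by nlinarith
  rw [hfirst, hsecond]
  push_cast
  field_simp
  ring
end

section
/- Let α ∈ ((√51 − 6)/3, (√129 − 9)/6] and let T_α be the 2-expansion map on [α, α+1]. Then T_α³(α) = T_α³(α + 1) = (4 − 10α)/(3α − 1). -/
/-!
`Texp α x` is the representative of `2 / x` modulo `1` in `[α, α + 1)`. For `α` between
`(√33 - 5) / 2` and `√2 - 1`, two steps take `α` to `x = (3α - 1) / (1 - 2α)`, with digits `4, 1`,
and `α + 1` to `y = (6α - 2) / (1 - α)`, with digits `1, 4`. Since `2 / y = 2 / x + 1`, the two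
orbits coincide from the third step on. The interval of the theorem, which is cut out by
`5 < 3α² + 12α` and `3α² + 9α ≤ 4`, consists of those `α` for which the third digit of `α` is `2`.
-/

section

variable {α : ℝ}

theorem texp_eq_texp_of_two_div_eq_add_int {x y : ℝ} (n : ℤ) (h : 2 / y = 2 / x + n) :
    Texp α y = Texp α x := by
  have shift : 2 / x + n - α = 2 / x - α + n := by ring
  rw [Texp, Texp, h, shift, Int.floor_add_intCast]
  push_cast
  ring

theorem texp_div_eq {p : ℝ} (hp : 0 < p) (q : ℝ) (n : ℤ) (hle : α * p ≤ 2 * q - n * p)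
    (hlt : 2 * q - n * p < (α + 1) * p) : Texp α (p / q) = (2 * q - n * p) / p := by
  have two_div : 2 / (p / q) = 2 * q / p := div_div_eq_mul_div 2 p q
  have digit : ⌊2 * q / p - α⌋ = n := by
    rw [Int.floor_eq_iff, le_sub_iff_add_le, sub_lt_iff_lt_add, le_div_iff₀ hp, div_lt_iff₀ hp]
    constructor <;> linarith
  rw [Texp, two_div, digit, sub_div, mul_div_cancel_right₀ _ hp.ne']

theorem texp_self (hlo : 2 < α ^ 2 + 5 * α) (hhi : α ^ 2 + 4 * α ≤ 2) :
    Texp α α = (2 - 4 * α) / α := by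
  simpa using texp_div_eq (α := α) (p := α) (by linarith) 1 4
    (by push_cast; linarith) (by push_cast; linarith)

theorem texp_two_sub_four_mul_div_self (hlo : 1 ≤ 2 * α ^ 2 + 2 * α) (hhi : α ^ 2 + 2 * α < 1) :
    Texp α ((2 - 4 * α) / α) = (3 * α - 1) / (1 - 2 * α) := by
  rw [texp_div_eq (by linarith) α 1 (by push_cast; linarith) (by push_cast; linarith),
    div_eq_div_iff (by linarith) (by linarith)]
  push_cast
  ring

theorem texp_add_one (hα : 0 < α) (hhi : α ^ 2 + 2 * α ≤ 1) :
    Texp α (α + 1) = (1 - α) / (α + 1) := by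
  have step := texp_div_eq (α := α) (p := α + 1) (by linarith) 1 1
    (by push_cast; linarith) (by push_cast; nlinarith)
  rw [div_one] at step
  rw [step]
  push_cast
  ring

theorem texp_one_sub_div_add_one (hlo : 2 ≤ α ^ 2 + 5 * α) (hhi : α ^ 2 + 6 * α < 3) :
    Texp α ((1 - α) / (α + 1)) = (6 * α - 2) / (1 - α) := by
  rw [texp_div_eq (by linarith) (α + 1) 4 (by push_cast; linarith) (by push_cast; linarith)]
  push_cast
  ring

theorem texp_texp_self (hlo : 2 < α ^ 2 + 5 * α) (hhi : α ^ 2 + 2 * α < 1) :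
    Texp α (Texp α α) = (3 * α - 1) / (1 - 2 * α) := by
  have lt_half : α < 1 / 2 := by nlinarith
  rw [texp_self hlo (by linarith), texp_two_sub_four_mul_div_self (by nlinarith) hhi]

theorem texp_texp_add_one (hlo : 2 ≤ α ^ 2 + 5 * α) (hhi : α ^ 2 + 2 * α ≤ 1) :
    Texp α (Texp α (α + 1)) = (6 * α - 2) / (1 - α) := by
  have lt_half : α < 1 / 2 := by nlinarith
  rw [texp_add_one (by linarith) hhi, texp_one_sub_div_add_one hlo (by linarith)]

theorem texp_texp_texp_add_one_eq_texp_texp_texp_self (hlo : 2 < α ^ 2 + 5 * α)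
    (hhi : α ^ 2 + 2 * α < 1) :
    Texp α (Texp α (Texp α (α + 1))) = Texp α (Texp α (Texp α α)) := by
  have denom_ne : 3 * α - 1 ≠ 0 := by linarith
  have two_div_add_one : 2 * (1 - α) / (6 * α - 2) = 2 * (1 - 2 * α) / (3 * α - 1) + 1 := by
    rw [show 6 * α - 2 = 2 * (3 * α - 1) by ring, mul_div_mul_left _ _ two_ne_zero,
      div_add_one denom_ne]
    ring
  rw [texp_texp_self hlo hhi, texp_texp_add_one hlo.le hhi.le]
  apply texp_eq_texp_of_two_div_eq_add_int 1
  rw [div_div_eq_mul_div, div_div_eq_mul_div, two_div_add_one, Int.cast_one]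

theorem texp_texp_texp_self (hlo : 5 < 3 * α ^ 2 + 12 * α) (hhi : 3 * α ^ 2 + 9 * α ≤ 4) :
    Texp α (Texp α (Texp α α)) = (4 - 10 * α) / (3 * α - 1) := by
  rw [texp_texp_self (by linarith) (by linarith),
    texp_div_eq (by linarith) _ 2 (by push_cast; linarith) (by push_cast; linarith)]
  push_cast
  ring

theorem pos_of_sqrt_fiftyOne_lt (h : (√51 - 6) / 3 < α) : 0 < α := by
  have : 6 < √51 := Real.lt_sqrt_of_sq_lt (by norm_num)
  linarith

theorem five_lt_of_sqrt_fiftyOne_lt (h : (√51 - 6) / 3 < α) : 5 < 3 * α ^ 2 + 12 * α := by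
  have : 51 < (3 * α + 6) ^ 2 := Real.lt_sq_of_sqrt_lt (by linarith)
  linarith

theorem le_four_of_le_sqrt_oneHundredTwentyNine (hα : 0 ≤ α) (h : α ≤ (√129 - 9) / 6) :
    3 * α ^ 2 + 9 * α ≤ 4 := by
  have : (6 * α + 9) ^ 2 ≤ 129 := (Real.le_sqrt' (by linarith)).mp (by linarith)
  linarith

end

theorem stmt_4 (α : ℝ) (h₁ : (Real.sqrt 51 - 6) / 3 < α) (h₂ : α ≤ (Real.sqrt 129 - 9) / 6) :
    Texp α (Texp α (Texp α α)) = (4 - 10 * α) / (3 * α - 1) ∧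
    Texp α (Texp α (Texp α (α + 1))) = (4 - 10 * α) / (3 * α - 1) := by
  have pos : 0 < α := pos_of_sqrt_fiftyOne_lt h₁
  have lower : 5 < 3 * α ^ 2 + 12 * α := five_lt_of_sqrt_fiftyOne_lt h₁
  have upper : 3 * α ^ 2 + 9 * α ≤ 4 := le_four_of_le_sqrt_oneHundredTwentyNine pos.le h₂
  have value := texp_texp_texp_self lower upper
  have matching : Texp α (Texp α (Texp α (α + 1))) = Texp α (Texp α (Texp α α)) :=
    texp_texp_texp_add_one_eq_texp_texp_texp_self (by linarith) (by linarith)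
  exact ⟨value, matching.trans value⟩
end

section
/- Let α ∈ ((√33 − 5)/2, √2 − 1), let T_α be the 2-expansion map on [α, α+1], and set A = (√33 − 5)/2, B = √2 − 1, C = (√33 − 3)/6, D = 2√2 − 2, E = (√33 − 3)/2, F = √2, and H = 1/log((1/32)(3 + 2√2)(7 + √33)(√33 − 5)²). Define f : [α, α+1] → ℝ by f(x) = H·( D/(2 + Dx)·1_{(α, (1−α)/(1+α))}(x) + E/(2 + Ex)·1_{((1−α)/(1+α), (3α−1)/(1−2α))}(x) + F/(2 + Fx)·1_{((3α−1)/(1−2α), α+1)}(x) − A/(2 + Ax)·1_{(α, (6α−2)/(1−α))}(x) − B/(2 + Bx)·1_{((6α−2)/(1−α), (2−4α)/α)}(x) − C/(2 + Cx)·1_{((2−4α)/α, α+1)}(x) ). Then the measure μ on [α, α+1] with density f with respect to Lebesgue measure is a T_α-invariant probability measure. -/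
open MeasureTheory Set

/-- The invariant density from Theorem `thm:natexonint`, with
`A = (√33-5)/2`, `B = √2-1`, `C = (√33-3)/6`, `D = 2√2-2`, `E = (√33-3)/2`, `F = √2`, and
normalizing constant `H = 1 / log((1/32)(3+2√2)(7+√33)(√33-5)²)`. -/
noncomputable def invDens (α x : ℝ) : ℝ :=
  (1 / Real.log ((1 / 32) * (3 + 2 * Real.sqrt 2) * (7 + Real.sqrt 33) * (Real.sqrt 33 - 5) ^ 2)) *
    ( indicator (Ioo α ((1 - α) / (1 + α)))
        (fun t => (2 * Real.sqrt 2 - 2) / (2 + (2 * Real.sqrt 2 - 2) * t)) x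
    + indicator (Ioo ((1 - α) / (1 + α)) ((3 * α - 1) / (1 - 2 * α)))
        (fun t => ((Real.sqrt 33 - 3) / 2) / (2 + ((Real.sqrt 33 - 3) / 2) * t)) x
    + indicator (Ioo ((3 * α - 1) / (1 - 2 * α)) (α + 1))
        (fun t => Real.sqrt 2 / (2 + Real.sqrt 2 * t)) x
    - indicator (Ioo α ((6 * α - 2) / (1 - α)))
        (fun t => ((Real.sqrt 33 - 5) / 2) / (2 + ((Real.sqrt 33 - 5) / 2) * t)) x
    - indicator (Ioo ((6 * α - 2) / (1 - α)) ((2 - 4 * α) / α))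
        (fun t => (Real.sqrt 2 - 1) / (2 + (Real.sqrt 2 - 1) * t)) x
    - indicator (Ioo ((2 - 4 * α) / α) (α + 1))
        (fun t => ((Real.sqrt 33 - 3) / 6) / (2 + ((Real.sqrt 33 - 3) / 6) * t)) x )

/-!
The density is read off the natural extension. Over `x` the natural extension domain has the fibre
`[lowerHeight α x, upperHeight α x]`, and the invariant density `2 / (2 + x * y) ^ 2` gives a fibre
`[a, b]` the mass `b / (2 + b * x) - a / (2 + a * x) = 1 / (x + 2 / b) - 1 / (x + 2 / a)`. At the
preimage `x = 2 / u`, `u = d + y`, of `y` this mass, weighted by `2 / u ^ 2`, becomes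
`1 / (u + a) - 1 / (u + b)`. Because the orbits of the endpoints `α` and `α + 1` match after three
steps, the upper end of the strip of digit `d` is the lower end of the strip of digit `d + 1`, so
the Perron–Frobenius sum over the digits telescopes to the fibre mass over `y`.

The total mass is a difference of two integrals, one for each boundary. Each is a sum of logarithms
in which all dependence on `α` cancels.
-/

theorem lintegral_comp_const_div {c : ℝ} (hc : c ≠ 0) (g : ℝ → ENNReal) :
    ∫⁻ x, g x = ∫⁻ u, ENNReal.ofReal |c / u ^ 2| * g (c / u) := by
  have image_eq : (fun u => c / u) '' {0}ᶜ = {0}ᶜ := by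
    ext x
    simp only [mem_image, mem_compl_singleton_iff]
    constructor
    · rintro ⟨u, hu, rfl⟩
      exact div_ne_zero hc hu
    · exact fun hx => ⟨c / x, div_ne_zero hc hx, div_div_cancel₀ hc⟩
  have hderiv : ∀ u ∈ ({0}ᶜ : Set ℝ), HasDerivWithinAt (fun u => c / u) (-(c / u ^ 2)) {0}ᶜ u := by
    intro u hu
    simpa [div_eq_mul_inv] using ((hasDerivAt_inv hu).const_mul c).hasDerivWithinAt
  have hinj : InjOn (fun u => c / u) {0}ᶜ := fun u _ v _ h => by
    rw [← div_div_cancel₀ hc (b := u), show c / u = c / v from h, div_div_cancel₀ hc]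
  have key := lintegral_image_eq_lintegral_abs_deriv_mul
    (measurableSet_singleton (0 : ℝ)).compl hderiv hinj g
  simpa only [image_eq, restrict_compl_singleton, abs_neg] using key

theorem lintegral_eq_setLIntegral_tsum_intCast_add (a : ℝ) {g : ℝ → ENNReal} (hg : Measurable g) :
    ∫⁻ u, g u = ∫⁻ y in Ico a (a + 1), ∑' d : ℤ, g (d + y) := by
  have translate (d : ℤ) :
      ∫⁻ u in Ico (a + d) (a + d + 1), g u = ∫⁻ y in Ico a (a + 1), g (d + y) := by
    rw [← (measurePreserving_add_left volume (d : ℝ)).setLIntegral_comp_preimage_emb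
      (measurableEmbedding_addLeft _), preimage_const_add_Ico]
    congr 3 <;> ring
  calc ∫⁻ u, g u = ∑' d : ℤ, ∫⁻ u in Ico (a + d) (a + d + 1), g u := by
        rw [← setLIntegral_univ, ← iUnion_Ico_add_intCast a,
          lintegral_iUnion (fun _ => measurableSet_Ico) (pairwise_disjoint_Ico_add_intCast a)]
    _ = ∫⁻ y in Ico a (a + 1), ∑' d : ℤ, g (d + y) := by
        simp_rw [translate]
        exact (lintegral_tsum fun d => by fun_prop).symm

theorem indicator_Ioo_add_add {R : Type*} [AddMonoid R] {a p q b x : ℝ} (f g h : ℝ → R)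
    (hpq : p ≤ q) (hx : x ∈ Ioo a b) (hxp : x ≠ p) (hxq : x ≠ q) :
    indicator (Ioo a p) f x + indicator (Ioo p q) g x + indicator (Ioo q b) h x =
      if x < p then f x else if x < q then g x else h x := by
  rcases hxp.lt_or_gt with hlt | hgt
  · simp [hx.1, hlt, hlt.not_gt, (hlt.trans_le hpq).not_gt]
  rcases hxq.lt_or_gt with hlt' | hgt'
  · simp [hgt, hgt.not_gt, hlt', hlt'.not_gt]
  · simp [hgt.not_gt, hgt', hgt'.not_gt, hx.2]

theorem integrable_indicator_Ioo_div {m a b c : ℝ} (hm : 0 < m) (ha : 0 < a) (hc : 0 < c) :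
    Integrable (indicator (Ioo a b) fun t => c / (m + c * t)) := by
  have hcont : ContinuousOn (fun t => c / (m + c * t)) (Icc a b) :=
    ContinuousOn.div (by fun_prop) (by fun_prop) fun t ht => by
      have := ha.trans_le ht.1
      positivity
  exact (hcont.integrableOn_Icc.mono_set Ioo_subset_Icc_self).integrable_indicator measurableSet_Ioo

theorem setIntegral_indicator_Ioo_div {m a b c : ℝ} {s : Set ℝ} (hm : 0 < m) (ha : 0 < a)
    (hab : a ≤ b) (hc : 0 < c) (hs : Ioo a b ⊆ s) :
    ∫ x in s, indicator (Ioo a b) (fun t => c / (m + c * t)) x =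
      Real.log (b + m / c) - Real.log (a + m / c) := by
  rw [setIntegral_indicator measurableSet_Ioo, inter_eq_right.2 hs,
    ← integral_Ioc_eq_integral_Ioo, ← intervalIntegral.integral_of_le hab]
  have hpos : ∀ x ∈ uIcc a b, 0 < x := fun x hx => ha.trans_le (uIcc_of_le hab ▸ hx).1
  have hderiv : ∀ x ∈ uIcc a b,
      HasDerivAt (fun x => Real.log (x + m / c)) (c / (m + c * x)) x := by
    intro x hx
    have := hpos x hx
    refine (((hasDerivAt_id' x).add_const (m / c)).log (by positivity)).congr_deriv ?_
    field_simp
    ring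
  refine intervalIntegral.integral_eq_sub_of_hasDerivAt hderiv (ContinuousOn.intervalIntegrable ?_)
  exact ContinuousOn.div (by fun_prop) (by fun_prop) fun x hx => by
    have := hpos x hx
    positivity

namespace Texp

protected theorem measurable (α : ℝ) : Measurable (Texp α) := by
  have h : Measurable fun x : ℝ => 2 / x := by fun_prop
  exact h.sub (measurable_from_top.comp (Int.measurable_floor.comp (h.sub_const α)))

theorem apply_two_div_intCast_add {α y : ℝ} (hy : y ∈ Ico α (α + 1)) (d : ℤ) :
    Texp α (2 / (d + y)) = y := by
  have hfloor : ⌊(d + y : ℝ) - α⌋ = d :=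
    Int.floor_eq_iff.2 ⟨by linarith [hy.1], by linarith [hy.2]⟩
  rw [Texp, div_div_cancel₀ two_ne_zero, hfloor, add_sub_cancel_left]

/-- The Perron–Frobenius operator of `Texp α` on densities over `(α, α + 1]`. The inverse branches
of `Texp α` are `y ↦ 2 / (d + y)` with `d` an integer digit, and the indicator discards the digits
that are not admissible at `y`. -/
noncomputable def transfer (α : ℝ) (f : ℝ → ENNReal) (y : ℝ) : ENNReal :=
  ∑' d : ℤ, ENNReal.ofReal (2 / (d + y) ^ 2) * (Ioc α (α + 1)).indicator f (2 / (d + y))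

theorem map_withDensity (α : ℝ) {f : ℝ → ENNReal} (hf : Measurable f) :
    ((volume.restrict (Ioc α (α + 1))).withDensity f).map (Texp α) =
      (volume.restrict (Ico α (α + 1))).withDensity (transfer α f) := by
  have hT := Texp.measurable α
  have hind : Measurable ((Ioc α (α + 1)).indicator f) := hf.indicator measurableSet_Ioc
  have htransfer : Measurable (transfer α f) := by
    unfold transfer
    fun_prop
  refine Measure.ext_of_lintegral _ fun φ hφ => ?_
  calc ∫⁻ y, φ y ∂((volume.restrict (Ioc α (α + 1))).withDensity f).map (Texp α)
      = ∫⁻ x, (Ioc α (α + 1)).indicator f x * φ (Texp α x) := by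
        rw [lintegral_map hφ hT, lintegral_withDensity_eq_lintegral_mul _ hf (by fun_prop),
          ← lintegral_indicator measurableSet_Ioc]
        exact lintegral_congr fun x => indicator_mul_left _ _ _
    _ = ∫⁻ u, ENNReal.ofReal (2 / u ^ 2) *
          ((Ioc α (α + 1)).indicator f (2 / u) * φ (Texp α (2 / u))) := by
        rw [lintegral_comp_const_div two_ne_zero]
        simp only [abs_div, abs_two, abs_sq]
    _ = ∫⁻ y in Ico α (α + 1), transfer α f y * φ y := by
        rw [lintegral_eq_setLIntegral_tsum_intCast_add α (by fun_prop)]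
        refine setLIntegral_congr_fun measurableSet_Ico fun y hy => ?_
        simp only [apply_two_div_intCast_add hy, ← mul_assoc, ENNReal.tsum_mul_right, transfer]
    _ = ∫⁻ y, φ y ∂(volume.restrict (Ico α (α + 1))).withDensity (transfer α f) :=
        (lintegral_withDensity_eq_lintegral_mul _ htransfer hφ).symm

theorem measurePreserving_of_transfer_eq {α : ℝ} {f : ℝ → ENNReal} (hf : Measurable f)
    (hfix : ∀ y ∈ Ico α (α + 1), transfer α f y = f y) :
    MeasurePreserving (Texp α) ((volume.restrict (Icc α (α + 1))).withDensity f)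
      ((volume.restrict (Icc α (α + 1))).withDensity f) := by
  refine ⟨Texp.measurable α, ?_⟩
  calc ((volume.restrict (Icc α (α + 1))).withDensity f).map (Texp α)
      = ((volume.restrict (Ioc α (α + 1))).withDensity f).map (Texp α) := by
        rw [Measure.restrict_congr_set Ioc_ae_eq_Icc]
    _ = (volume.restrict (Ico α (α + 1))).withDensity f := by
        rw [map_withDensity α hf]
        exact withDensity_congr_ae (ae_restrict_of_forall_mem measurableSet_Ico hfix)
    _ = (volume.restrict (Icc α (α + 1))).withDensity f := by
        rw [Measure.restrict_congr_set Ico_ae_eq_Icc]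

end Texp

/-- `T_α(α)`, a jump of `lowerHeight`. -/
noncomputable def orbitLeft₁ (α : ℝ) : ℝ := (2 - 4 * α) / α

/-- `T_α²(α)`, a jump of `upperHeight`. -/
noncomputable def orbitLeft₂ (α : ℝ) : ℝ := (3 * α - 1) / (1 - 2 * α)

/-- `T_α(α + 1)`, a jump of `upperHeight`. -/
noncomputable def orbitRight₁ (α : ℝ) : ℝ := (1 - α) / (1 + α)

/-- `T_α²(α + 1)`, a jump of `lowerHeight`. -/
noncomputable def orbitRight₂ (α : ℝ) : ℝ := (6 * α - 2) / (1 - α)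

/-- The upper boundary of the natural extension domain of `Texp α` over `x`. The values at the jumps
are chosen so that the gluing relations between the boundaries hold at every point. -/
noncomputable def upperHeight (α x : ℝ) : ℝ :=
  if x < orbitRight₁ α then 2 * √2 - 2 else if x ≤ orbitLeft₂ α then (√33 - 3) / 2 else √2

/-- The lower boundary of the natural extension domain of `Texp α` over `x`, with the values at the
jumps chosen as for `upperHeight`. -/
noncomputable def lowerHeight (α x : ℝ) : ℝ :=
  if x ≤ orbitRight₂ α then (√33 - 5) / 2 else if x < orbitLeft₁ α then √2 - 1 else (√33 - 3) / 6

/-- The mass `∫ y in a..b, 2 / (2 + x * y) ^ 2` of the vertical fibre `[a, b]` over `x`. -/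
noncomputable def fiberMass (a b x : ℝ) : ℝ := b / (2 + b * x) - a / (2 + a * x)

/-- The unnormalized invariant density of `Texp α`: the projection to the first coordinate of the
density `2 / (2 + x * y) ^ 2` on the natural extension domain. -/
noncomputable def projDensity (α x : ℝ) : ℝ := fiberMass (lowerHeight α x) (upperHeight α x) x

section FiberMass

variable {a b x : ℝ}

theorem fiberMass_nonneg (ha : 0 ≤ a) (hab : a ≤ b) (hx : 0 ≤ x) : 0 ≤ fiberMass a b x := by
  have hb := ha.trans hab
  rw [fiberMass, sub_nonneg, div_le_div_iff₀ (by positivity) (by positivity)]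
  linarith

theorem fiberMass_eq_one_div_sub (ha : 0 < a) (hb : 0 < b) (hx : 0 ≤ x) :
    fiberMass a b x = 1 / (x + 2 / b) - 1 / (x + 2 / a) := by
  have flip {c : ℝ} (hc : 0 < c) : c / (2 + c * x) = 1 / (x + 2 / c) := by
    field_simp
    ring
  rw [fiberMass, flip ha, flip hb]

theorem mul_fiberMass_two_div (ha : 0 ≤ a) (hb : 0 ≤ b) {u : ℝ} (hu : 0 < u) :
    2 / u ^ 2 * fiberMass a b (2 / u) = 1 / (u + a) - 1 / (u + b) := by
  rw [fiberMass]
  field_simp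
  ring

end FiberMass

theorem sqrt_two_mem_Ioo : √2 ∈ Ioo 1.4 1.5 :=
  ⟨Real.lt_sqrt_of_sq_lt (by norm_num), (Real.sqrt_lt' (by norm_num)).2 (by norm_num)⟩

theorem sqrt_thirtyThree_mem_Ioo : √33 ∈ Ioo 5.7 5.75 :=
  ⟨Real.lt_sqrt_of_sq_lt (by norm_num), (Real.sqrt_lt' (by norm_num)).2 (by norm_num)⟩

theorem two_div_two_mul_sqrt_two_sub_two : 2 / (2 * √2 - 2) = √2 + 1 := by
  rw [div_eq_iff (by linarith [sqrt_two_mem_Ioo.1])]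
  linear_combination -2 * Real.sq_sqrt (show (0 : ℝ) ≤ 2 by norm_num)

theorem two_div_sqrt_two_sub_one : 2 / (√2 - 1) = 2 * √2 + 2 := by
  rw [div_eq_iff (by linarith [sqrt_two_mem_Ioo.1])]
  linear_combination -2 * Real.sq_sqrt (show (0 : ℝ) ≤ 2 by norm_num)

theorem two_div_sqrt_thirtyThree_sub_three_div_two : 2 / ((√33 - 3) / 2) = (√33 + 3) / 6 := by
  rw [div_eq_iff (by linarith [sqrt_thirtyThree_mem_Ioo.1])]
  linear_combination -(1 / 12) * Real.sq_sqrt (show (0 : ℝ) ≤ 33 by norm_num)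

theorem two_div_sqrt_thirtyThree_sub_five_div_two : 2 / ((√33 - 5) / 2) = (√33 + 5) / 2 := by
  rw [div_eq_iff (by linarith [sqrt_thirtyThree_mem_Ioo.1])]
  linear_combination -(1 / 4) * Real.sq_sqrt (show (0 : ℝ) ≤ 33 by norm_num)

theorem two_div_sqrt_thirtyThree_sub_three_div_six : 2 / ((√33 - 3) / 6) = (√33 + 3) / 2 := by
  rw [div_eq_iff (by linarith [sqrt_thirtyThree_mem_Ioo.1])]
  linear_combination -(1 / 12) * Real.sq_sqrt (show (0 : ℝ) ≤ 33 by norm_num)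

section Heights

variable (α x : ℝ)

theorem lowerHeight_pos : 0 < lowerHeight α x := by
  have h2 := sqrt_two_mem_Ioo.1
  have h33 := sqrt_thirtyThree_mem_Ioo.1
  unfold lowerHeight
  split_ifs <;> linarith

theorem lowerHeight_lt_upperHeight : lowerHeight α x < upperHeight α x := by
  obtain ⟨h2, h2'⟩ := sqrt_two_mem_Ioo
  obtain ⟨h33, h33'⟩ := sqrt_thirtyThree_mem_Ioo
  calc lowerHeight α x < 1 / 2 := by
        unfold lowerHeight
        split_ifs <;> linarith
    _ < upperHeight α x := by
        unfold upperHeight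
        split_ifs <;> linarith

theorem upperHeight_pos : 0 < upperHeight α x :=
  (lowerHeight_pos α x).trans (lowerHeight_lt_upperHeight α x)

theorem measurable_projDensity : Measurable (projDensity α) := by
  have hupper : Measurable (upperHeight α) :=
    .ite measurableSet_Iio measurable_const <| .ite measurableSet_Iic measurable_const
      measurable_const
  have hlower : Measurable (lowerHeight α) :=
    .ite measurableSet_Iic measurable_const <| .ite measurableSet_Iio measurable_const
      measurable_const
  unfold projDensity fiberMass
  fun_prop

variable {x} in
theorem projDensity_nonneg (hx : 0 ≤ x) : 0 ≤ projDensity α x :=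
  fiberMass_nonneg (lowerHeight_pos α x).le (lowerHeight_lt_upperHeight α x).le hx

end Heights

section EndpointOrbits

variable {α : ℝ}

theorem one_add_orbitRight₁ (h : 1 + α ≠ 0) : 1 + orbitRight₁ α = 2 / (α + 1) := by
  rw [orbitRight₁, add_comm α]
  field_simp
  ring

theorem four_add_orbitLeft₁ (h : α ≠ 0) : 4 + orbitLeft₁ α = 2 / α := by
  rw [orbitLeft₁]
  field_simp
  ring

theorem four_add_orbitRight₂ (h : 1 - α ≠ 0) : 4 + orbitRight₂ α = 2 / orbitRight₁ α := by
  rw [orbitRight₁, orbitRight₂]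
  field_simp
  ring

theorem one_add_orbitLeft₂ (h : 1 - 2 * α ≠ 0) : 1 + orbitLeft₂ α = 2 / orbitLeft₁ α := by
  rw [orbitLeft₁, orbitLeft₂, show 2 - 4 * α = 2 * (1 - 2 * α) by ring, div_div_eq_mul_div,
    mul_div_mul_left _ _ two_ne_zero, one_add_div h]
  ring

/-- The matching relation: the orbits of the two endpoints merge at the third step. -/
theorem two_div_orbitRight₂ (h : 3 * α - 1 ≠ 0) :
    2 / orbitRight₂ α = 2 / orbitLeft₂ α + 1 := by
  rw [orbitRight₂, orbitLeft₂, show 6 * α - 2 = 2 * (3 * α - 1) by ring]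
  field_simp
  ring

theorem one_third_lt (h₁ : (√33 - 5) / 2 < α) : 1 / 3 < α := by
  linarith [sqrt_thirtyThree_mem_Ioo.1]

theorem lt_one_half (h₂ : α < √2 - 1) : α < 1 / 2 := by
  linarith [sqrt_two_mem_Ioo.2]

theorem two_lt_sq_add_five_mul (h₁ : (√33 - 5) / 2 < α) : 2 < α ^ 2 + 5 * α := by
  nlinarith [Real.sq_sqrt (show (0 : ℝ) ≤ 33 by norm_num), one_third_lt h₁, Real.sqrt_nonneg 33]

theorem sq_add_two_mul_lt_one (hα : 0 < α) (h₂ : α < √2 - 1) : α ^ 2 + 2 * α < 1 := by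
  nlinarith [Real.sq_sqrt (show (0 : ℝ) ≤ 2 by norm_num), Real.sqrt_nonneg 2]

theorem lt_orbitRight₁ (hα : 0 < α) (h₂ : α < √2 - 1) : α < orbitRight₁ α := by
  rw [orbitRight₁, lt_div_iff₀ (by linarith)]
  linarith [sq_add_two_mul_lt_one hα h₂]

theorem orbitLeft₂_lt (hα : 0 < α) (h₂ : α < √2 - 1) : orbitLeft₂ α < α + 1 := by
  rw [orbitLeft₂, div_lt_iff₀ (by linarith [lt_one_half h₂])]
  linarith [sq_add_two_mul_lt_one hα h₂]

theorem orbitRight₂_lt_orbitLeft₁ (hα : 0 < α) (h₂ : α < √2 - 1) :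
    orbitRight₂ α < orbitLeft₁ α := by
  rw [orbitRight₂, orbitLeft₁, div_lt_div_iff₀ (by linarith [lt_one_half h₂]) hα]
  linarith [sq_add_two_mul_lt_one hα h₂]

theorem orbitLeft₁_lt (h₁ : (√33 - 5) / 2 < α) : orbitLeft₁ α < α + 1 := by
  rw [orbitLeft₁, div_lt_iff₀ (by linarith [one_third_lt h₁])]
  linarith [two_lt_sq_add_five_mul h₁]

theorem lt_orbitRight₂ (h₁ : (√33 - 5) / 2 < α) (h₂ : α < √2 - 1) : α < orbitRight₂ α := by
  rw [orbitRight₂, lt_div_iff₀ (by linarith [lt_one_half h₂])]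
  linarith [two_lt_sq_add_five_mul h₁]

theorem orbitRight₁_lt_orbitLeft₂ (h₁ : (√33 - 5) / 2 < α) (h₂ : α < √2 - 1) :
    orbitRight₁ α < orbitLeft₂ α := by
  rw [orbitRight₁, orbitLeft₂,
    div_lt_div_iff₀ (by linarith [one_third_lt h₁]) (by linarith [lt_one_half h₂])]
  linarith [two_lt_sq_add_five_mul h₁]

end EndpointOrbits

section Gluing

variable {α u y : ℝ}

theorem upperHeight_two_div (h₁ : (√33 - 5) / 2 < α) (h₂ : α < √2 - 1) (hu : 0 < u) :
    upperHeight α (2 / u) = if 4 + orbitRight₂ α < u then 2 * √2 - 2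
      else if 2 / orbitLeft₂ α ≤ u then (√33 - 3) / 2 else √2 := by
  have hα := one_third_lt h₁
  have hR₁ : 0 < orbitRight₁ α := by linarith [lt_orbitRight₁ (by linarith) h₂]
  have hL₂ : 0 < orbitLeft₂ α := hR₁.trans (orbitRight₁_lt_orbitLeft₂ h₁ h₂)
  simp only [upperHeight, div_lt_comm₀ hu hR₁, div_le_comm₀ hu hL₂,
    four_add_orbitRight₂ (show 1 - α ≠ 0 by linarith [lt_one_half h₂])]

theorem lowerHeight_two_div (h₁ : (√33 - 5) / 2 < α) (h₂ : α < √2 - 1) (hu : 0 < u) :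
    lowerHeight α (2 / u) = if 2 / orbitLeft₂ α + 1 ≤ u then (√33 - 5) / 2
      else if 1 + orbitLeft₂ α < u then √2 - 1 else (√33 - 3) / 6 := by
  have hα := one_third_lt h₁
  have hR₂ : 0 < orbitRight₂ α := by linarith [lt_orbitRight₂ h₁ h₂]
  have hL₁ : 0 < orbitLeft₁ α := hR₂.trans (orbitRight₂_lt_orbitLeft₁ (by linarith) h₂)
  simp only [lowerHeight, div_le_comm₀ hu hR₂, div_lt_comm₀ hu hL₁,
    one_add_orbitLeft₂ (show 1 - 2 * α ≠ 0 by linarith [lt_one_half h₂]),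
    two_div_orbitRight₂ (show 3 * α - 1 ≠ 0 by linarith)]

theorem one_add_orbitRight₁_lt_two_div (h₁ : (√33 - 5) / 2 < α) (h₂ : α < √2 - 1) :
    1 + orbitRight₁ α < 2 / orbitLeft₂ α := by
  have hα := one_third_lt h₁
  have hR₁ := lt_orbitRight₁ (by linarith) h₂
  have hL₂ := orbitRight₁_lt_orbitLeft₂ h₁ h₂
  rw [one_add_orbitRight₁ (by linarith)]
  exact div_lt_div_of_pos_left two_pos (by linarith) (orbitLeft₂_lt (by linarith) h₂)

theorem two_div_lt_three_add_orbitLeft₁ (h₁ : (√33 - 5) / 2 < α) (h₂ : α < √2 - 1) :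
    2 / orbitLeft₂ α < 3 + orbitLeft₁ α := by
  have hα := one_third_lt h₁
  have two_div_lt := div_lt_div_of_pos_left two_pos (by linarith) (lt_orbitRight₂ h₁ h₂)
  rw [← four_add_orbitLeft₁ (show α ≠ 0 by linarith),
    two_div_orbitRight₂ (by linarith)] at two_div_lt
  linarith

theorem upperHeight_two_div_eq_one_add (h₁ : (√33 - 5) / 2 < α) (h₂ : α < √2 - 1)
    (hu : orbitLeft₂ α < u) (hu' : u ≤ 4 + orbitRight₂ α) :
    upperHeight α (2 / u) = 1 + lowerHeight α (2 / (u + 1)) := by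
  have hα := one_third_lt h₁
  have hR₁ := lt_orbitRight₁ (by linarith) h₂
  have hL₂ := orbitRight₁_lt_orbitLeft₂ h₁ h₂
  rw [upperHeight_two_div h₁ h₂ (by linarith), lowerHeight_two_div h₁ h₂ (by linarith),
    if_neg hu'.not_gt, if_pos (show 1 + orbitLeft₂ α < u + 1 by linarith)]
  simp only [add_le_add_iff_right]
  split_ifs <;> ring

theorem two_div_upperHeight_of_lt (h₁ : (√33 - 5) / 2 < α) (h₂ : α < √2 - 1)
    (hy : α ≤ y) (hyR : y < orbitRight₁ α) :
    2 / upperHeight α y = 2 + lowerHeight α (2 / (2 + y)) := by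
  have hα := one_third_lt h₁
  rw [lowerHeight_two_div h₁ h₂ (by linarith),
    if_neg (by linarith [one_add_orbitRight₁_lt_two_div h₁ h₂]),
    if_pos (by linarith [orbitLeft₂_lt (by linarith) h₂]), upperHeight, if_pos hyR,
    two_div_two_mul_sqrt_two_sub_two]
  ring

theorem two_div_upperHeight_of_le (h₁ : (√33 - 5) / 2 < α) (h₂ : α < √2 - 1)
    (hyR : orbitRight₁ α ≤ y) (hy : y < α + 1) :
    2 / upperHeight α y = 1 + lowerHeight α (2 / (1 + y)) := by
  have hα := one_third_lt h₁
  have hR₁ := lt_orbitRight₁ (by linarith) h₂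
  have h33 := sqrt_thirtyThree_mem_Ioo.1
  rw [lowerHeight_two_div h₁ h₂ (by linarith),
    if_neg (by linarith [one_add_orbitRight₁_lt_two_div h₁ h₂]), upperHeight, if_neg hyR.not_gt]
  simp only [add_lt_add_iff_left]
  rcases le_or_gt y (orbitLeft₂ α) with hyL | hyL
  · rw [if_pos hyL, if_neg hyL.not_gt, two_div_sqrt_thirtyThree_sub_three_div_two]
    ring
  · rw [if_neg hyL.not_ge, if_pos hyL, Real.div_sqrt]
    ring

theorem two_div_lowerHeight_of_lt (h₁ : (√33 - 5) / 2 < α) (h₂ : α < √2 - 1)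
    (hy : α ≤ y) (hyL : y < orbitLeft₁ α) :
    2 / lowerHeight α y = 4 + upperHeight α (2 / (4 + y)) := by
  have h33 := sqrt_thirtyThree_mem_Ioo.1
  have hL₂ := two_div_lt_three_add_orbitLeft₁ h₁ h₂
  have hL₁ := orbitLeft₁_lt h₁
  rw [upperHeight_two_div h₁ h₂ (by linarith), if_pos (show 2 / orbitLeft₂ α ≤ 4 + y by linarith),
    lowerHeight, if_pos hyL]
  simp only [add_lt_add_iff_left]
  rcases le_or_gt y (orbitRight₂ α) with hyR | hyR
  · rw [if_pos hyR, if_neg hyR.not_gt, two_div_sqrt_thirtyThree_sub_five_div_two]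
    ring
  · rw [if_neg hyR.not_ge, if_pos hyR, two_div_sqrt_two_sub_one]
    ring

theorem two_div_lowerHeight_of_le (h₁ : (√33 - 5) / 2 < α) (h₂ : α < √2 - 1)
    (hyL : orbitLeft₁ α ≤ y) (hy : y < α + 1) :
    2 / lowerHeight α y = 3 + upperHeight α (2 / (3 + y)) := by
  have h33 := sqrt_thirtyThree_mem_Ioo.1
  have hR₂ := lt_orbitRight₂ h₁ h₂
  have hR₂L₁ := orbitRight₂_lt_orbitLeft₁ (by linarith) h₂
  rw [upperHeight_two_div h₁ h₂ (by linarith), if_neg (by linarith),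
    if_pos (by linarith [two_div_lt_three_add_orbitLeft₁ h₁ h₂]), lowerHeight,
    if_neg (by linarith), if_neg hyL.not_gt, two_div_sqrt_thirtyThree_sub_three_div_six]
  ring

end Gluing

section Transfer

variable {α u y : ℝ}

theorem two_div_mem_Ioc_iff (hα : 0 < α) :
    2 / u ∈ Ioc α (α + 1) ↔ u ∈ Ico (1 + orbitRight₁ α) (4 + orbitLeft₁ α) := by
  rw [one_add_orbitRight₁ (by positivity), four_add_orbitLeft₁ hα.ne', mem_Ioc, mem_Ico]
  constructor
  · rintro ⟨hlt, hle⟩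
    have hu : 0 < u := (div_pos_iff_of_pos_left two_pos).1 (hα.trans hlt)
    exact ⟨(div_le_comm₀ hu (by positivity)).1 hle, (lt_div_comm₀ hα hu).1 hlt⟩
  · rintro ⟨hle, hlt⟩
    have hu : 0 < u := lt_of_lt_of_le (by positivity) hle
    exact ⟨(lt_div_comm₀ hα hu).2 hlt, (div_le_comm₀ hu (by positivity)).2 hle⟩

theorem mul_projDensity_two_div (hu : 0 < u) : 2 / u ^ 2 * projDensity α (2 / u) =
    1 / (u + lowerHeight α (2 / u)) - 1 / (u + upperHeight α (2 / u)) :=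
  mul_fiberMass_two_div (lowerHeight_pos α _).le (upperHeight_pos α _).le hu

theorem mul_projDensity_two_div_eq_sub_succ (h₁ : (√33 - 5) / 2 < α) (h₂ : α < √2 - 1)
    (hu : orbitLeft₂ α < u) (hu' : u ≤ 4 + orbitRight₂ α) :
    2 / u ^ 2 * projDensity α (2 / u) =
      1 / (u + lowerHeight α (2 / u)) - 1 / (u + 1 + lowerHeight α (2 / (u + 1))) := by
  have hα := one_third_lt h₁
  have hR₁ := lt_orbitRight₁ (by linarith) h₂
  have hL₂ := orbitRight₁_lt_orbitLeft₂ h₁ h₂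
  rw [mul_projDensity_two_div (by linarith), upperHeight_two_div_eq_one_add h₁ h₂ hu hu', add_assoc]

theorem indicator_transfer_one (h₁ : (√33 - 5) / 2 < α) (h₂ : α < √2 - 1)
    (hy : y ∈ Ico α (α + 1)) :
    2 / (1 + y) ^ 2 * (Ioc α (α + 1)).indicator (projDensity α) (2 / (1 + y)) =
      1 / (y + 2 / upperHeight α y) - 1 / (2 + y + lowerHeight α (2 / (2 + y))) := by
  have hα := one_third_lt h₁
  rcases lt_or_ge y (orbitRight₁ α) with hyR | hyR
  · rw [two_div_upperHeight_of_lt h₁ h₂ hy.1 hyR, indicator_of_notMem]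
    · ring
    · rw [two_div_mem_Ioc_iff (by linarith)]
      exact fun h => absurd h.1 (by linarith)
  · have hL₂ := orbitLeft₂_lt (by linarith) h₂
    have hL₁ := (lt_orbitRight₂ h₁ h₂).trans (orbitRight₂_lt_orbitLeft₁ (by linarith) h₂)
    have hR₂ := lt_orbitRight₂ h₁ h₂
    rw [two_div_upperHeight_of_le h₁ h₂ hyR hy.2, indicator_of_mem,
      mul_projDensity_two_div_eq_sub_succ h₁ h₂ (by linarith [hy.1]) (by linarith [hy.2])]
    · ring_nf
    · exact (two_div_mem_Ioc_iff (by linarith)).2 ⟨by linarith, by linarith [hy.2]⟩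

theorem indicator_transfer_four (h₁ : (√33 - 5) / 2 < α) (h₂ : α < √2 - 1)
    (hy : y ∈ Ico α (α + 1)) :
    2 / (4 + y) ^ 2 * (Ioc α (α + 1)).indicator (projDensity α) (2 / (4 + y)) =
      1 / (3 + y + upperHeight α (2 / (3 + y))) - 1 / (y + 2 / lowerHeight α y) := by
  have hα := one_third_lt h₁
  have hR₁ := lt_orbitRight₁ (by linarith) h₂
  have hL₂ := orbitRight₁_lt_orbitLeft₂ h₁ h₂
  have hL₂' := orbitLeft₂_lt (by linarith) h₂
  have hR₂ := lt_orbitRight₂ h₁ h₂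
  rcases lt_or_ge y (orbitLeft₁ α) with hyL | hyL
  · rw [two_div_lowerHeight_of_lt h₁ h₂ hy.1 hyL, indicator_of_mem,
      mul_projDensity_two_div (by linarith [hy.1]),
      upperHeight_two_div_eq_one_add h₁ h₂ (u := 3 + y) (by linarith [hy.1]) (by linarith [hy.2])]
    · ring_nf
    · exact (two_div_mem_Ioc_iff (by linarith)).2 ⟨by linarith [hy.1], by linarith⟩
  · rw [two_div_lowerHeight_of_le h₁ h₂ hyL hy.2, indicator_of_notMem]
    · ring
    · rw [two_div_mem_Ioc_iff (by linarith)]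
      exact fun h => absurd h.2 (by linarith)

theorem sum_transfer_projDensity (h₁ : (√33 - 5) / 2 < α) (h₂ : α < √2 - 1)
    (hy : y ∈ Ico α (α + 1)) :
    ∑ d ∈ Finset.Icc (1 : ℤ) 4,
        2 / (d + y) ^ 2 * (Ioc α (α + 1)).indicator (projDensity α) (2 / (d + y)) =
      projDensity α y := by
  have hα := one_third_lt h₁
  have hR₁ := orbitRight₁_lt_orbitLeft₂ h₁ h₂
  have hL₂ := orbitLeft₂_lt (by linarith) h₂
  have hR₂ := lt_orbitRight₂ h₁ h₂
  have hL₁ := orbitRight₂_lt_orbitLeft₁ (by linarith) h₂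
  have digit_two :
      2 / (2 + y) ^ 2 * (Ioc α (α + 1)).indicator (projDensity α) (2 / (2 + y)) =
        1 / (2 + y + lowerHeight α (2 / (2 + y))) - 1 / (3 + y + lowerHeight α (2 / (3 + y))) := by
    rw [indicator_of_mem ((two_div_mem_Ioc_iff (by linarith)).2
        ⟨by linarith [hy.1], by linarith [hy.2]⟩),
      mul_projDensity_two_div_eq_sub_succ h₁ h₂ (by linarith [hy.1]) (by linarith [hy.2])]
    ring_nf
  have digit_three :
      2 / (3 + y) ^ 2 * (Ioc α (α + 1)).indicator (projDensity α) (2 / (3 + y)) =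
        1 / (3 + y + lowerHeight α (2 / (3 + y))) - 1 / (3 + y + upperHeight α (2 / (3 + y))) := by
    rw [indicator_of_mem ((two_div_mem_Ioc_iff (by linarith)).2
        ⟨by linarith [hy.1], by linarith [hy.2]⟩), mul_projDensity_two_div (by linarith [hy.1])]
  rw [show Finset.Icc (1 : ℤ) 4 = {1, 2, 3, 4} by rfl, projDensity,
    fiberMass_eq_one_div_sub (lowerHeight_pos α y) (upperHeight_pos α y) (by linarith [hy.1])]
  simp [indicator_transfer_one h₁ h₂ hy, digit_two, digit_three, indicator_transfer_four h₁ h₂ hy]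

theorem digit_mem_Icc (h₁ : (√33 - 5) / 2 < α) (h₂ : α < √2 - 1) (hy : y ∈ Ico α (α + 1))
    {d : ℤ} (hd : 2 / (d + y) ∈ Ioc α (α + 1)) : d ∈ Finset.Icc (1 : ℤ) 4 := by
  have hα := one_third_lt h₁
  have hR₁ := lt_orbitRight₁ (by linarith) h₂
  have hL₁ := orbitLeft₁_lt h₁
  obtain ⟨hle, hlt⟩ := (two_div_mem_Ioc_iff (by linarith)).1 hd
  have hpos : (0 : ℝ) < d := by linarith [hy.2]
  have hlt_five : (d : ℝ) < 5 := by linarith [hy.1]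
  exact Finset.mem_Icc.2
    ⟨by exact_mod_cast hpos, Int.lt_add_one_iff.1 (by exact_mod_cast hlt_five)⟩

theorem transfer_projDensity (h₁ : (√33 - 5) / 2 < α) (h₂ : α < √2 - 1)
    (hy : y ∈ Ico α (α + 1)) :
    Texp.transfer α (fun x => ENNReal.ofReal (projDensity α x)) y =
      ENNReal.ofReal (projDensity α y) := by
  have hα := one_third_lt h₁
  have term_nonneg (d : ℤ) :
      0 ≤ 2 / (d + y) ^ 2 * (Ioc α (α + 1)).indicator (projDensity α) (2 / (d + y)) :=
    mul_nonneg (by positivity)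
      (indicator_nonneg (fun x hx => projDensity_nonneg α (by linarith [hx.1])) _)
  calc Texp.transfer α (fun x => ENNReal.ofReal (projDensity α x)) y
      = ∑' d : ℤ, ENNReal.ofReal
          (2 / (d + y) ^ 2 * (Ioc α (α + 1)).indicator (projDensity α) (2 / (d + y))) := by
        refine tsum_congr fun d => ?_
        rw [ENNReal.ofReal_mul (by positivity)]
        congr 1
        exact congr_fun (indicator_comp_of_zero ENNReal.ofReal_zero) _
    _ = ENNReal.ofReal (projDensity α y) := by
        rw [tsum_eq_sum (s := Finset.Icc 1 4) fun d hd => by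
            rw [indicator_of_notMem fun hmem => hd (digit_mem_Icc h₁ h₂ hy hmem), mul_zero,
              ENNReal.ofReal_zero],
          ← ENNReal.ofReal_sum_of_nonneg fun d _ => term_nonneg d,
          sum_transfer_projDensity h₁ h₂ hy]

end Transfer

/-- The function `c / (2 + c * x)` on `(a, b)`, with `c` equal to `c₁`, `c₂`, `c₃` on `(a, p)`,
`(p, q)`, `(q, b)`: the common shape of `upperKernel` and `lowerKernel`. -/
noncomputable def stepKernel (a p q b c₁ c₂ c₃ x : ℝ) : ℝ :=
  indicator (Ioo a p) (fun t => c₁ / (2 + c₁ * t)) x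
    + indicator (Ioo p q) (fun t => c₂ / (2 + c₂ * t)) x
    + indicator (Ioo q b) (fun t => c₃ / (2 + c₃ * t)) x

section StepKernel

variable {a p q b c₁ c₂ c₃ : ℝ}

theorem integrable_stepKernel (ha : 0 < a) (hap : a ≤ p) (hpq : p ≤ q)
    (hc₁ : 0 < c₁) (hc₂ : 0 < c₂) (hc₃ : 0 < c₃) :
    Integrable (stepKernel a p q b c₁ c₂ c₃) :=
  have hp := ha.trans_le hap
  ((integrable_indicator_Ioo_div two_pos ha hc₁).add
    (integrable_indicator_Ioo_div two_pos hp hc₂)).add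
      (integrable_indicator_Ioo_div two_pos (hp.trans_le hpq) hc₃)

theorem setIntegral_stepKernel (ha : 0 < a) (hap : a ≤ p) (hpq : p ≤ q) (hqb : q ≤ b)
    (hc₁ : 0 < c₁) (hc₂ : 0 < c₂) (hc₃ : 0 < c₃) :
    ∫ x in Icc a b, stepKernel a p q b c₁ c₂ c₃ x =
      (Real.log (p + 2 / c₁) - Real.log (a + 2 / c₁))
        + (Real.log (q + 2 / c₂) - Real.log (p + 2 / c₂))
        + (Real.log (b + 2 / c₃) - Real.log (q + 2 / c₃)) := by
  have hp := ha.trans_le hap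
  have hq := hp.trans_le hpq
  have hint₁ := (integrable_indicator_Ioo_div two_pos ha hc₁ (b := p)).integrableOn (s := Icc a b)
  have hint₂ := (integrable_indicator_Ioo_div two_pos hp hc₂ (b := q)).integrableOn (s := Icc a b)
  have hint₃ := (integrable_indicator_Ioo_div two_pos hq hc₃ (b := b)).integrableOn (s := Icc a b)
  simp only [stepKernel]
  rw [integral_add (by exact hint₁.add hint₂) hint₃, integral_add hint₁ hint₂,
    setIntegral_indicator_Ioo_div two_pos ha hap hc₁
      (Ioo_subset_Icc_self.trans (Icc_subset_Icc_right (hpq.trans hqb))),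
    setIntegral_indicator_Ioo_div two_pos hp hpq hc₂
      (Ioo_subset_Icc_self.trans (Icc_subset_Icc hap hqb)),
    setIntegral_indicator_Ioo_div two_pos hq hqb hc₃
      (Ioo_subset_Icc_self.trans (Icc_subset_Icc_left (hap.trans hpq)))]

end StepKernel

/-- The total mass of `projDensity α` on `[α, α + 1]` is the logarithm of this constant. -/
noncomputable def massExp : ℝ := (1 / 32) * (3 + 2 * √2) * (7 + √33) * (√33 - 5) ^ 2

theorem one_lt_massExp : 1 < massExp := by
  have h2 := sqrt_two_mem_Ioo.1
  have h33 := sqrt_thirtyThree_mem_Ioo.1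
  calc (1 : ℝ) < 1 / 32 * (3 + 2 * 1.4) * (7 + 5.7) * (5.7 - 5) ^ 2 := by norm_num
    _ ≤ massExp := by
      unfold massExp
      gcongr

section Density

variable {α : ℝ}

/-- The contribution of `upperHeight α` to the density, equal to
`upperHeight α x / (2 + upperHeight α x * x)` off the jumps. -/
noncomputable def upperKernel (α : ℝ) : ℝ → ℝ :=
  stepKernel α (orbitRight₁ α) (orbitLeft₂ α) (α + 1) (2 * √2 - 2) ((√33 - 3) / 2) √2

/-- The contribution of `lowerHeight α` to the density, equal to
`lowerHeight α x / (2 + lowerHeight α x * x)` off the jumps. -/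
noncomputable def lowerKernel (α : ℝ) : ℝ → ℝ :=
  stepKernel α (orbitRight₂ α) (orbitLeft₁ α) (α + 1) ((√33 - 5) / 2) (√2 - 1) ((√33 - 3) / 6)

theorem invDens_eq_upperKernel_sub_lowerKernel (α x : ℝ) :
    invDens α x = 1 / Real.log massExp * (upperKernel α x - lowerKernel α x) := by
  unfold upperKernel lowerKernel stepKernel
  rw [← sub_sub, ← sub_sub]
  rfl

theorem upperKernel_ae_eq (h₁ : (√33 - 5) / 2 < α) (h₂ : α < √2 - 1) :
    upperKernel α =ᵐ[volume.restrict (Icc α (α + 1))]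
      fun x => upperHeight α x / (2 + upperHeight α x * x) := by
  rw [Measure.restrict_congr_set Ioo_ae_eq_Icc.symm]
  filter_upwards [ae_restrict_mem measurableSet_Ioo, Measure.ae_ne _ (orbitRight₁ α),
    Measure.ae_ne _ (orbitLeft₂ α)] with x hx hxR hxL
  rw [upperKernel, stepKernel, upperHeight,
    indicator_Ioo_add_add _ _ _ (orbitRight₁_lt_orbitLeft₂ h₁ h₂).le hx hxR hxL]
  simp only [hxL.le_iff_lt]
  split_ifs <;> rfl

theorem lowerKernel_ae_eq (h₁ : (√33 - 5) / 2 < α) (h₂ : α < √2 - 1) :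
    lowerKernel α =ᵐ[volume.restrict (Icc α (α + 1))]
      fun x => lowerHeight α x / (2 + lowerHeight α x * x) := by
  have hα := one_third_lt h₁
  rw [Measure.restrict_congr_set Ioo_ae_eq_Icc.symm]
  filter_upwards [ae_restrict_mem measurableSet_Ioo, Measure.ae_ne _ (orbitRight₂ α),
    Measure.ae_ne _ (orbitLeft₁ α)] with x hx hxR hxL
  rw [lowerKernel, stepKernel, lowerHeight,
    indicator_Ioo_add_add _ _ _ (orbitRight₂_lt_orbitLeft₁ (by linarith) h₂).le hx hxR hxL]
  simp only [hxR.le_iff_lt]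
  split_ifs <;> rfl

theorem invDens_ae_eq (h₁ : (√33 - 5) / 2 < α) (h₂ : α < √2 - 1) :
    invDens α =ᵐ[volume.restrict (Icc α (α + 1))]
      fun x => 1 / Real.log massExp * projDensity α x := by
  filter_upwards [upperKernel_ae_eq h₁ h₂, lowerKernel_ae_eq h₁ h₂] with x hupper hlower
  rw [invDens_eq_upperKernel_sub_lowerKernel, hupper, hlower, projDensity, fiberMass]

theorem orbitRight₁_add_eq_mul_orbitLeft₂_add (h : 1 + α ≠ 0) (h' : 1 - 2 * α ≠ 0) :
    orbitRight₁ α + (√2 + 1) =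
      √2 * (3 + 2 * √2) * ((1 - 2 * α) / (1 + α)) * (orbitLeft₂ α + √2) := by
  rw [orbitRight₁, orbitLeft₂]
  replace h' : 1 - α * 2 ≠ 0 := by rwa [mul_comm]
  field_simp
  linear_combination -(2 * (3 * α - 1) + (3 + 2 * √2) * (1 - 2 * α)) *
    Real.sq_sqrt (show (0 : ℝ) ≤ 2 by norm_num)

theorem orbitLeft₂_add_eq_mul_orbitRight₁_add (h : 1 + α ≠ 0) (h' : 1 - 2 * α ≠ 0) :
    orbitLeft₂ α + (√33 + 3) / 6 =
      2 / (√33 + 5) * ((1 + α) / (1 - 2 * α)) * (orbitRight₁ α + (√33 + 3) / 6) := by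
  rw [orbitRight₁, orbitLeft₂]
  replace h' : 1 - α * 2 ≠ 0 := by rwa [mul_comm]
  field_simp
  linear_combination (1 - 2 * α) * Real.sq_sqrt (show (0 : ℝ) ≤ 33 by norm_num)

theorem orbitLeft₁_add_eq_mul_orbitRight₂_add (h : α ≠ 0) (h' : 1 - α ≠ 0) :
    orbitLeft₁ α + (2 * √2 + 2) = √2 / 2 * ((1 - α) / α) * (orbitRight₂ α + (2 * √2 + 2)) := by
  rw [orbitRight₂, orbitLeft₁]
  field_simp
  linear_combination -2 * (1 - α) * Real.sq_sqrt (show (0 : ℝ) ≤ 2 by norm_num)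

theorem orbitRight₂_add_eq_mul_orbitLeft₁_add (h : α ≠ 0) (h' : 1 - α ≠ 0) :
    orbitRight₂ α + (√33 + 5) / 2 =
      (√33 + 1) / 4 * (α / (1 - α)) * (orbitLeft₁ α + (√33 + 3) / 2) := by
  rw [orbitRight₂, orbitLeft₁]
  field_simp
  linear_combination -α * Real.sq_sqrt (show (0 : ℝ) ≤ 33 by norm_num)

theorem setIntegral_upperKernel (h₁ : (√33 - 5) / 2 < α) (h₂ : α < √2 - 1) :
    ∫ x in Icc α (α + 1), upperKernel α x = Real.log (2 * √2 * (3 + 2 * √2) / (√33 + 5)) := by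
  have hα : 0 < α := by linarith [one_third_lt h₁]
  have hα' : 0 < 1 - 2 * α := by linarith [lt_one_half h₂]
  have h33 := sqrt_thirtyThree_mem_Ioo.1
  have hR₁ := lt_orbitRight₁ hα h₂
  have hL₂ := orbitRight₁_lt_orbitLeft₂ h₁ h₂
  have log_orbitRight₁ := congrArg Real.log
    (orbitRight₁_add_eq_mul_orbitLeft₂_add (by positivity : 1 + α ≠ 0) hα'.ne')
  have log_orbitLeft₂ := congrArg Real.log
    (orbitLeft₂_add_eq_mul_orbitRight₁_add (by positivity : 1 + α ≠ 0) hα'.ne')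
  rw [Real.log_mul (by positivity) (by linarith)] at log_orbitRight₁ log_orbitLeft₂
  have log_const : Real.log (√2 * (3 + 2 * √2) * ((1 - 2 * α) / (1 + α))) +
      Real.log (2 / (√33 + 5) * ((1 + α) / (1 - 2 * α))) =
        Real.log (2 * √2 * (3 + 2 * √2) / (√33 + 5)) := by
    rw [← Real.log_mul (by positivity) (by positivity)]
    congr 1
    field_simp
  rw [upperKernel, setIntegral_stepKernel hα hR₁.le hL₂.le (orbitLeft₂_lt hα h₂).le
      (by linarith) (by linarith) (by linarith), two_div_two_mul_sqrt_two_sub_two,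
    two_div_sqrt_thirtyThree_sub_three_div_two, Real.div_sqrt,
    show α + 1 + √2 = α + (√2 + 1) by ring]
  linarith

theorem setIntegral_lowerKernel (h₁ : (√33 - 5) / 2 < α) (h₂ : α < √2 - 1) :
    ∫ x in Icc α (α + 1), lowerKernel α x = Real.log (√2 * (√33 + 1) / 8) := by
  have hα : 0 < α := by linarith [one_third_lt h₁]
  have hα' : 0 < 1 - α := by linarith [lt_one_half h₂]
  have h33 := sqrt_thirtyThree_mem_Ioo.1
  have hR₂ := lt_orbitRight₂ h₁ h₂
  have hL₁ := orbitRight₂_lt_orbitLeft₁ hα h₂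
  have log_orbitLeft₁ := congrArg Real.log
    (orbitLeft₁_add_eq_mul_orbitRight₂_add hα.ne' hα'.ne')
  have log_orbitRight₂ := congrArg Real.log
    (orbitRight₂_add_eq_mul_orbitLeft₁_add hα.ne' hα'.ne')
  rw [Real.log_mul (by positivity) (by linarith)] at log_orbitLeft₁ log_orbitRight₂
  have log_const : Real.log (√2 / 2 * ((1 - α) / α)) + Real.log ((√33 + 1) / 4 * (α / (1 - α))) =
      Real.log (√2 * (√33 + 1) / 8) := by
    rw [← Real.log_mul (by positivity) (by positivity)]
    congr 1
    field_simp
    norm_num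
  rw [lowerKernel, setIntegral_stepKernel hα hR₂.le hL₁.le (orbitLeft₁_lt h₁).le
      (by linarith) (by linarith) (by linarith), two_div_sqrt_thirtyThree_sub_five_div_two,
    two_div_sqrt_two_sub_one, two_div_sqrt_thirtyThree_sub_three_div_six,
    show α + 1 + (√33 + 3) / 2 = α + (√33 + 5) / 2 by ring]
  linarith

theorem massExp_eq_div :
    massExp = 2 * √2 * (3 + 2 * √2) / (√33 + 5) / (√2 * (√33 + 1) / 8) := by
  rw [massExp]
  field_simp
  linear_combination (√33 ^ 3 + 3 * √33 ^ 2 - 25 * √33 - 11) *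
    Real.sq_sqrt (show (0 : ℝ) ≤ 33 by norm_num)

theorem integrable_upperKernel (h₁ : (√33 - 5) / 2 < α) (h₂ : α < √2 - 1) :
    Integrable (upperKernel α) := by
  have h33 := sqrt_thirtyThree_mem_Ioo.1
  exact integrable_stepKernel (by linarith) (lt_orbitRight₁ (by linarith) h₂).le
    (orbitRight₁_lt_orbitLeft₂ h₁ h₂).le (by linarith) (by linarith) (by linarith)

theorem integrable_lowerKernel (h₁ : (√33 - 5) / 2 < α) (h₂ : α < √2 - 1) :
    Integrable (lowerKernel α) := by
  have h33 := sqrt_thirtyThree_mem_Ioo.1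
  exact integrable_stepKernel (by linarith) (lt_orbitRight₂ h₁ h₂).le
    (orbitRight₂_lt_orbitLeft₁ (by linarith) h₂).le (by linarith) (by linarith) (by linarith)

theorem integrable_invDens (h₁ : (√33 - 5) / 2 < α) (h₂ : α < √2 - 1) :
    Integrable (invDens α) := by
  rw [funext (invDens_eq_upperKernel_sub_lowerKernel α)]
  exact ((integrable_upperKernel h₁ h₂).sub (integrable_lowerKernel h₁ h₂)).const_mul _

theorem setIntegral_invDens (h₁ : (√33 - 5) / 2 < α) (h₂ : α < √2 - 1) :
    ∫ x in Icc α (α + 1), invDens α x = 1 := by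
  simp only [invDens_eq_upperKernel_sub_lowerKernel]
  rw [integral_const_mul, integral_sub (integrable_upperKernel h₁ h₂).integrableOn
      (integrable_lowerKernel h₁ h₂).integrableOn, setIntegral_upperKernel h₁ h₂,
    setIntegral_lowerKernel h₁ h₂, ← Real.log_div (by positivity) (by positivity),
    ← massExp_eq_div]
  exact one_div_mul_cancel (Real.log_pos one_lt_massExp).ne'

theorem invDens_ae_nonneg (h₁ : (√33 - 5) / 2 < α) (h₂ : α < √2 - 1) :
    0 ≤ᵐ[volume.restrict (Icc α (α + 1))] invDens α := by
  filter_upwards [invDens_ae_eq h₁ h₂, ae_restrict_mem measurableSet_Icc] with x hx hmem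
  have hα := one_third_lt h₁
  rw [hx]
  exact mul_nonneg (one_div_pos.2 (Real.log_pos one_lt_massExp)).le
    (projDensity_nonneg α (by linarith [hmem.1]))

theorem withDensity_invDens (h₁ : (√33 - 5) / 2 < α) (h₂ : α < √2 - 1) :
    (volume.restrict (Icc α (α + 1))).withDensity (fun x => ENNReal.ofReal (invDens α x)) =
      ENNReal.ofReal (1 / Real.log massExp) • (volume.restrict (Icc α (α + 1))).withDensity
        fun x => ENNReal.ofReal (projDensity α x) := by
  rw [← withDensity_smul _ (measurable_projDensity α).ennreal_ofReal]
  refine withDensity_congr_ae ?_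
  filter_upwards [invDens_ae_eq h₁ h₂] with x hx
  rw [hx, ENNReal.ofReal_mul (one_div_pos.2 (Real.log_pos one_lt_massExp)).le]
  rfl

end Density

theorem stmt_7 (α : ℝ) (h₁ : (Real.sqrt 33 - 5) / 2 < α) (h₂ : α < Real.sqrt 2 - 1) :
    MeasurePreserving (Texp α)
      ((volume.restrict (Icc α (α + 1))).withDensity fun x => ENNReal.ofReal (invDens α x))
      ((volume.restrict (Icc α (α + 1))).withDensity fun x => ENNReal.ofReal (invDens α x)) ∧
    IsProbabilityMeasure
      ((volume.restrict (Icc α (α + 1))).withDensity fun x => ENNReal.ofReal (invDens α x)) := by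
  constructor
  · rw [withDensity_invDens h₁ h₂]
    exact (Texp.measurePreserving_of_transfer_eq (measurable_projDensity α).ennreal_ofReal
      fun y hy => transfer_projDensity h₁ h₂ hy).smul_measure _
  · refine ⟨?_⟩
    rw [withDensity_apply _ MeasurableSet.univ, Measure.restrict_univ,
      ← ofReal_integral_eq_lintegral_ofReal (integrable_invDens h₁ h₂).restrict
      (invDens_ae_nonneg h₁ h₂), setIntegral_invDens h₁ h₂, ENNReal.ofReal_one]
end
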